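/- Let q ≥ 1 and s with 1 ≤ s ≤ q be integers, and let r > 0 and ε > 0. Then there exists a finite set F ⊆ ℝ^q of cardinality at most (q choose s) · (1 + 2r/ε)^s such that for every W ∈ ℝ^q with ‖W‖₀ ≤ s and ‖W‖_∞ ≤ r there is V ∈ F with ‖W − V‖_∞ ≤ ε; moreover F can be chosen so that every V ∈ F satisfies ‖V‖₀ ≤ s. -/

import Mathlib

/-- The number of nonzero coordinates (`ℓ⁰` "norm") of a vector in `ℝ^q`. -/
noncomputable def l0norm {q : ℕ} (W : Fin q → ℝ) : ℕ :=
  (Finset.univ.filter fun j => W j ≠ 0).card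

/-!
An `s`-sparse vector is supported in one of the `q.choose s` coordinate subspaces of dimension `s`,
and in each of them the sup-norm ball of radius `r` is an `s`-fold power of `[-r, r]`. Since
sup-norm covers multiply, the points of these subspaces whose free coordinates lie in a net of
`[-r, r]` with at most `1 + 2 * r / ε` points are the required net.
-/

open Finset Metric
open scoped NNReal

theorem l0norm_eq_hammingNorm {q : ℕ} (W : Fin q → ℝ) : l0norm W = hammingNorm W := rfl

theorem exists_isCover_Icc_card_le {a b : ℝ} (hab : a ≤ b) {ε : ℝ≥0} (hε : 0 < ε) :
    ∃ G : Finset ℝ, (#G : ℝ) ≤ 1 + (b - a) / ε ∧ IsCover ε (Set.Icc a b) (G : Set ℝ) := by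
  have hε' : (0 : ℝ) < ε := hε
  refine ⟨(range (⌊(b - a) / ε⌋₊ + 1)).image fun k : ℕ => a + k * ε, ?_, ?_⟩
  · calc
      (#((range (⌊(b - a) / ε⌋₊ + 1)).image fun k : ℕ => a + k * ε) : ℝ)
          ≤ (⌊(b - a) / ε⌋₊ + 1 : ℕ) := by
        exact_mod_cast card_image_le.trans_eq (card_range _)
      _ = 1 + (⌊(b - a) / ε⌋₊ : ℝ) := by push_cast; ring
      _ ≤ 1 + (b - a) / ε := by
        gcongr
        exact Nat.floor_le (div_nonneg (sub_nonneg.mpr hab) hε'.le)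
  · rw [isCover_iff_subset_iUnion_closedBall]
    rintro x ⟨hax, hxb⟩
    have floor_mul_le : ⌊(x - a) / ε⌋₊ * (ε : ℝ) ≤ x - a :=
      (le_div_iff₀ hε').mp (Nat.floor_le (div_nonneg (sub_nonneg.mpr hax) hε'.le))
    have le_succ_floor_mul : x - a ≤ (⌊(x - a) / ε⌋₊ + 1) * (ε : ℝ) :=
      (div_le_iff₀ hε').mp (Nat.lt_floor_add_one _).le
    have floor_mem : ⌊(x - a) / ε⌋₊ ∈ range (⌊(b - a) / ε⌋₊ + 1) :=
      mem_range_succ_iff.mpr (by gcongr)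
    refine Set.mem_biUnion (mem_coe.mpr (mem_image_of_mem _ floor_mem)) ?_
    rw [mem_closedBall, Real.dist_eq, abs_le]
    constructor <;> linarith

theorem isCover_univ_pi {ι : Type*} [Fintype ι] {X : ι → Type*} [∀ i, PseudoEMetricSpace (X i)]
    {ε : ℝ≥0} {A N : ∀ i, Set (X i)} (h : ∀ i, IsCover ε (A i) (N i)) :
    IsCover ε (Set.univ.pi A) (Set.univ.pi N) := by
  intro x hx
  choose y hyN hxy using fun i => h i (hx i trivial)
  exact ⟨y, fun i _ => hyN i, edist_pi_le_iff.mpr hxy⟩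

section SparseGrid

variable {ι α : Type*} [Fintype ι] [DecidableEq ι] [Zero α]

/-- The finite grid of the vectors supported in `S` all of whose coordinates in `S` lie in `G`. -/
def supportedGrid (S : Finset ι) (G : Finset α) : Finset (ι → α) :=
  Fintype.piFinset fun j => if j ∈ S then G else {0}

theorem card_supportedGrid (S : Finset ι) (G : Finset α) : #(supportedGrid S G) = #G ^ #S := by
  simp [supportedGrid, Fintype.card_piFinset, apply_ite card, prod_ite_mem]

theorem eq_zero_of_mem_supportedGrid {S : Finset ι} {G : Finset α} {V : ι → α}
    (hV : V ∈ supportedGrid S G) {j : ι} (hj : j ∉ S) : V j = 0 := by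
  simpa [hj] using Fintype.mem_piFinset.mp hV j

theorem isCover_supportedGrid [PseudoEMetricSpace α] {ε : ℝ≥0} {A : Set α} {G : Finset α}
    (hG : IsCover ε A (G : Set α)) (S : Finset ι) :
    IsCover ε {W : ι → α | (∀ j ∈ S, W j ∈ A) ∧ ∀ j ∉ S, W j = 0}
      (supportedGrid S G : Set (ι → α)) := by
  have coord_cover (j : ι) : IsCover ε (if j ∈ S then A else {0})
      ((if j ∈ S then G else {0} : Finset α) : Set α) := by
    split_ifs
    · exact hG
    · simp
  rw [supportedGrid, Fintype.coe_piFinset]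
  refine (isCover_univ_pi coord_cover).anti ?_
  rintro W ⟨hWA, hW0⟩ j -
  by_cases hj : j ∈ S
  · simpa [hj] using hWA j hj
  · simpa [hj] using hW0 j hj

variable [DecidableEq α]

variable (ι) in
/-- The union of the grids `supportedGrid S G` over the coordinate sets `S` with exactly `s`
elements; it consists of `s`-sparse vectors, whose sparsity is measured by `hammingNorm`. -/
def sparseGrid (s : ℕ) (G : Finset α) : Finset (ι → α) :=
  (powersetCard s univ).biUnion fun S => supportedGrid S G

theorem card_sparseGrid_le (s : ℕ) (G : Finset α) :
    #(sparseGrid ι s G) ≤ (Fintype.card ι).choose s * #G ^ s := by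
  have card_le : ∀ S ∈ powersetCard s (univ : Finset ι), #(supportedGrid S G) ≤ #G ^ s := by
    intro S hS
    rw [card_supportedGrid, (mem_powersetCard.mp hS).2]
  simpa only [sparseGrid, card_powersetCard, card_univ] using
    card_biUnion_le_card_mul _ _ _ card_le

theorem hammingNorm_le_of_mem_sparseGrid {s : ℕ} {G : Finset α} {V : ι → α}
    (hV : V ∈ sparseGrid ι s G) : hammingNorm V ≤ s := by
  obtain ⟨S, hS, hVS⟩ := mem_biUnion.mp hV
  rw [← (mem_powersetCard.mp hS).2]
  refine card_le_card fun j hj => ?_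
  by_contra hjS
  exact (mem_filter.mp hj).2 (eq_zero_of_mem_supportedGrid hVS hjS)

theorem isCover_sparseGrid [PseudoEMetricSpace α] {ε : ℝ≥0} {A : Set α} {G : Finset α}
    (hG : IsCover ε A (G : Set α)) {s : ℕ} (hs : s ≤ Fintype.card ι) :
    IsCover ε {W : ι → α | hammingNorm W ≤ s ∧ ∀ j, W j ∈ A} (sparseGrid ι s G : Set (ι → α)) := by
  rintro W ⟨hWs, hWA⟩
  obtain ⟨S, support_subset, card_S⟩ := exists_superset_card_eq hWs hs
  have W_eq_zero (j : ι) (hj : j ∉ S) : W j = 0 := by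
    by_contra hWj
    exact hj (support_subset (by simpa using hWj))
  obtain ⟨V, hVS, hWV⟩ := isCover_supportedGrid hG S ⟨fun j _ => hWA j, W_eq_zero⟩
  exact ⟨V, mem_biUnion.mpr ⟨S, mem_powersetCard_univ.mpr card_S, hVS⟩, hWV⟩

end SparseGrid

/-- Covering of the set of `s`-sparse vectors with `‖·‖_∞ ≤ r` by at most
`(q choose s)(1 + 2r/ε)^s` points at resolution `ε` in `‖·‖_∞`, with the net itself
consisting of `s`-sparse vectors. -/
theorem stmt_18 (q s : ℕ) (hq : 1 ≤ q) (hs1 : 1 ≤ s) (hsq : s ≤ q) (r ε : ℝ)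
    (hr : 0 < r) (hε : 0 < ε) :
    ∃ F : Finset (Fin q → ℝ),
      (F.card : ℝ) ≤ (q.choose s : ℝ) * (1 + 2 * r / ε) ^ s ∧
      (∀ W : Fin q → ℝ, l0norm W ≤ s → (∀ j, |W j| ≤ r) →
        ∃ V ∈ F, ∀ j, |W j - V j| ≤ ε) ∧
      (∀ V ∈ F, l0norm V ≤ s) := by
  simp only [l0norm_eq_hammingNorm]
  lift ε to ℝ≥0 using hε.le
  obtain ⟨G, card_G_le, cover_G⟩ :=
    exists_isCover_Icc_card_le (a := -r) (b := r) (by linarith) (NNReal.coe_pos.mp hε)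
  refine ⟨sparseGrid (Fin q) s G, ?_, ?_, fun V hV => hammingNorm_le_of_mem_sparseGrid hV⟩
  · calc
      (#(sparseGrid (Fin q) s G) : ℝ) ≤ q.choose s * (#G : ℝ) ^ s := by
        exact_mod_cast Fintype.card_fin q ▸ card_sparseGrid_le (ι := Fin q) s G
      _ ≤ q.choose s * (1 + 2 * r / ε) ^ s := by
        gcongr
        rwa [sub_neg_eq_add, ← two_mul] at card_G_le
  · intro W hWs hWr
    obtain ⟨V, hV, hWV⟩ := isCover_sparseGrid cover_G (by rwa [Fintype.card_fin])
      ⟨hWs, fun j => abs_le.mp (hWr j)⟩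
    have dist_le : dist W V ≤ ε := edist_le_coe.mp hWV
    exact ⟨V, hV, (dist_pi_le_iff ε.coe_nonneg).mp dist_le⟩
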